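/- arXiv:1010.0411 — 2 statements merged into one kernel-verified Lean document; each statement's English description precedes it below -/
import Mathlib

section
/- For all windows h, k ∈ 𝓢(Ξ) and every smooth vector f ∈ A^∞ one has the inversion identity ∫_Ξ \overline{k(X)} · Θ_{−X}[(𝔉(M_h f))(X)] dX = ⟨k,h⟩_{L²(Ξ)} · f, where ⟨k,h⟩_{L²(Ξ)} = ∫_Ξ \overline{k(X)} h(X) dX; in particular, if h ≠ 0 then f = ‖h‖_{L²(Ξ)}^{−2} · ∫_Ξ \overline{h(X)} Θ_{−X}[(𝔉(M_h f))(X)] dX. -/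
/-!
The symplectic Fourier transform, normalized by `(2π)⁻ⁿ` on `ℝ²ⁿ`, is an involution on Schwartz
functions (`symp_fourier_involutive`). This follows from ordinary Fourier inversion on a
`2n`-dimensional Euclidean space: the form `ω` becomes the inner product when its first argument is
rotated by the symplectic matrix, and the two factors `(2π)⁻ⁿ` are absorbed by rescaling the
frequency variable by `2π`.

It applies to the `A`-valued function `Z ↦ h(Z) Θ_Z(f)`, which is Schwartz. Indeed automorphisms of
a C⋆-algebra are isometric and `Θ_{Z+W} f = Θ_Z (Θ_W f)`, so every derivative of the orbit map
`Z ↦ Θ_Z(f)` has constant norm (`orbit_hasTemperateGrowth`). Hence `𝔉(M_h f)(X) = h(X) Θ_X(f)`,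
the operator `Θ_{-X}` turns this into `h(X) f`, and integrating against `conj k` gives the claim.
-/


open MeasureTheory Complex
open scoped ENNReal

noncomputable section

/-- `Ξ = ℝⁿ × ℝⁿ`. -/
abbrev Xi (n : ℕ) : Type := (Fin n → ℝ) × (Fin n → ℝ)

/-- The symplectic form on `Ξ`: `ω((x,ξ),(y,η)) = y·ξ − x·η`. -/
def symp {n : ℕ} (X Y : Xi n) : ℝ :=
  (∑ i, Y.1 i * X.2 i) - ∑ i, X.1 i * Y.2 i

/-- `κ(X,Y) = exp(−(i/2)·ω(X,Y))`. -/
def kap {n : ℕ} (X Y : Xi n) : ℂ := Complex.exp (-(Complex.I / 2) * (symp X Y : ℂ))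

/-- The normalized measure `dX = (2π)^{−n} ×` Lebesgue measure on `Ξ = ℝ^{2n}`. -/
def nmeas (n : ℕ) : Measure (Xi n) := (ENNReal.ofReal ((2 * Real.pi) ^ n))⁻¹ • volume

open scoped FourierTransform ContDiff

/-- The `2n`-dimensional Euclidean space, i.e. `Ξ` with an inner product norm. -/
abbrev EucXi (n : ℕ) : Type := EuclideanSpace ℝ (Fin n ⊕ Fin n)

/-- The identification of the Euclidean space `ℝ²ⁿ` with `Ξ = ℝⁿ × ℝⁿ`. -/
def eucXi (n : ℕ) : EucXi n ≃L[ℝ] Xi n :=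
  (EuclideanSpace.equiv (Fin n ⊕ Fin n) ℝ).trans
    (ContinuousLinearEquiv.sumPiEquivProdPi ℝ (Fin n) (Fin n) (fun _ => ℝ))

/-- The rotation `(x, ξ) ↦ (-ξ, x)` of `Ξ`. -/
def rotXi (n : ℕ) (X : Xi n) : Xi n := (-X.2, X.1)

lemma symp_rotXi {n : ℕ} (v w : EucXi n) :
    symp (rotXi n (eucXi n v)) (eucXi n w) = inner ℝ w v := by
  have h1 : ∀ u : EucXi n, ∀ i, (eucXi n u).1 i = u (Sum.inl i) := fun _ _ => rfl
  have h2 : ∀ u : EucXi n, ∀ i, (eucXi n u).2 i = u (Sum.inr i) := fun _ _ => rfl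
  simp [symp, rotXi, h1, h2, PiLp.inner_apply, Fintype.sum_sum_type, mul_comm]

lemma symp_swap {n : ℕ} (X Y : Xi n) : symp X Y = - symp Y X := by
  simp [symp]

lemma measurePreserving_eucXi (n : ℕ) : MeasurePreserving (eucXi n) volume volume :=
  (volume_measurePreserving_sumPiEquivProdPi (fun _ : Fin n ⊕ Fin n => ℝ)).comp
    (PiLp.volume_preserving_ofLp (Fin n ⊕ Fin n))

lemma measurePreserving_rotXi (n : ℕ) : MeasurePreserving (rotXi n) volume volume :=
  ((Measure.measurePreserving_neg (volume : Measure (Fin n → ℝ))).prod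
    (MeasurePreserving.id volume)).comp Measure.measurePreserving_swap

lemma integral_eucXi {n : ℕ} {E : Type*} [NormedAddCommGroup E] [NormedSpace ℝ E]
    (g : Xi n → E) : ∫ v, g (eucXi n v) = ∫ X, g X :=
  (measurePreserving_eucXi n).integral_comp
    (eucXi n).toHomeomorph.measurableEmbedding g

lemma integral_rotXi {n : ℕ} {E : Type*} [NormedAddCommGroup E] [NormedSpace ℝ E]
    (g : Xi n → E) : ∫ X, g (rotXi n X) = ∫ X, g X := by
  let e : Xi n ≃ᵐ Xi n :=
    { toFun := rotXi n
      invFun := fun X => (X.2, -X.1)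
      left_inv := fun X => by simp [rotXi]
      right_inv := fun X => by simp [rotXi]
      measurable_toFun := (measurePreserving_rotXi n).measurable
      measurable_invFun := measurable_snd.prodMk measurable_fst.neg }
  exact (measurePreserving_rotXi n).integral_comp e.measurableEmbedding g

lemma integral_nmeas {n : ℕ} {E : Type*} [NormedAddCommGroup E] [NormedSpace ℝ E]
    (g : Xi n → E) : ∫ X, g X ∂(nmeas n) = ((2 * Real.pi) ^ n)⁻¹ • ∫ X, g X := by
  rw [nmeas, integral_smul_measure, ENNReal.toReal_inv, ENNReal.toReal_ofReal (by positivity)]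

/-- In Euclidean coordinates, the symplectic Fourier transform is a rescaling of the ordinary one. -/
lemma symp_fourier_eq {n : ℕ} {E : Type*} [NormedAddCommGroup E] [NormedSpace ℂ E]
    (F : Xi n → E) (v : EucXi n) :
    ∫ Z, Complex.exp (-Complex.I * (symp (rotXi n (eucXi n v)) Z : ℂ)) • F Z ∂(nmeas n)
      = ((2 * Real.pi) ^ n)⁻¹ • 𝓕 (fun w => F (eucXi n w)) ((2 * Real.pi)⁻¹ • v) := by
  rw [integral_nmeas, ← integral_eucXi, Real.fourier_eq']
  congr 1
  refine integral_congr_ae (Filter.Eventually.of_forall fun w => ?_)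
  simp only [symp_rotXi, inner_smul_right]
  congr 2
  have : (Real.pi : ℂ) ≠ 0 := by exact_mod_cast Real.pi_ne_zero
  push_cast
  field_simp

/-- The symplectic Fourier transform squares to the identity on Schwartz functions. -/
lemma symp_fourier_involutive {n : ℕ} {E : Type*} [NormedAddCommGroup E] [NormedSpace ℂ E]
    [CompleteSpace E] (F : SchwartzMap (Xi n) E) (X : Xi n) :
    ∫ Y, Complex.exp (-Complex.I * (symp X Y : ℂ)) •
      (∫ Z, Complex.exp (-Complex.I * (symp Y Z : ℂ)) • F Z ∂(nmeas n)) ∂(nmeas n) = F X := by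
  obtain ⟨x, rfl⟩ := (eucXi n).surjective X
  let G : SchwartzMap (EucXi n) E :=
    SchwartzMap.compCLMOfContinuousLinearEquiv ℂ (eucXi n) F
  have hG : (G : EucXi n → E) = fun w => F (eucXi n w) := rfl
  have hinv : 𝓕⁻ (𝓕 (G : EucXi n → E)) x = G x := by
    rw [G.continuous.fourierInv_fourier_eq G.integrable (𝓕 G).integrable]
  have hpi : (Real.pi : ℂ) ≠ 0 := by exact_mod_cast Real.pi_ne_zero
  rw [integral_nmeas, ← integral_rotXi, ← integral_eucXi]
  simp_rw [symp_fourier_eq, ← hG]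
  have key : ∀ v : EucXi n,
      Complex.exp (-Complex.I * (symp (eucXi n x) (rotXi n (eucXi n v)) : ℂ)) •
        ((2 * Real.pi) ^ n)⁻¹ • 𝓕 (G : EucXi n → E) ((2 * Real.pi)⁻¹ • v)
      = ((2 * Real.pi) ^ n)⁻¹ • (fun u : EucXi n =>
          Complex.exp ((2 * Real.pi * inner ℝ u x : ℝ) * Complex.I) • 𝓕 (G : EucXi n → E) u)
          ((2 * Real.pi)⁻¹ • v) := by
    intro v
    rw [smul_comm, symp_swap, symp_rotXi]
    simp only [inner_smul_left, real_inner_comm]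
    congr 3
    push_cast
    simp
    field_simp
  rw [integral_congr_ae (Filter.Eventually.of_forall key), integral_smul,
    Measure.integral_comp_smul volume (fun u : EucXi n =>
      Complex.exp ((2 * Real.pi * inner ℝ u x : ℝ) * Complex.I) • 𝓕 (G : EucXi n → E) u)]
  have hfin : Module.finrank ℝ (EucXi n) = n + n := by simp [EucXi]
  rw [← Real.fourierInv_eq', hinv, hfin, smul_smul, smul_smul, hG]
  have : ((2 * Real.pi) ^ n)⁻¹ * ((2 * Real.pi) ^ n)⁻¹ *
      |(((2 * Real.pi)⁻¹) ^ (n + n))⁻¹| = 1 := by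
    rw [abs_of_pos (by positivity), inv_pow, inv_inv, pow_add]
    field_simp
  rw [this, one_smul]

/-- All derivatives of the orbit map of a smooth vector are bounded: translating the argument
amounts to applying the isometry `Θ_X`, so their norms are constant. -/
lemma orbit_hasTemperateGrowth {n : ℕ} {A : Type*} [CStarAlgebra A]
    (Θ : Xi n → A ≃⋆ₐ[ℂ] A)
    (hΘadd : ∀ X Y f, Θ (X + Y) f = Θ X (Θ Y f)) (f : A)
    (hf : ContDiff ℝ ∞ fun X => Θ X f) :
    (fun X => Θ X f).HasTemperateGrowth := by
  refine ⟨hf, fun m => ⟨0, ‖iteratedFDeriv ℝ m (fun X => Θ X f) 0‖, fun X => ?_⟩⟩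
  let L : A →ₗᵢ[ℝ] A :=
    { toFun := Θ X
      map_add' := map_add (Θ X)
      map_smul' := fun r a => by
        have := map_smul (Θ X) (r : ℂ) a
        simpa using this
      norm_map' := fun a => NonUnitalStarAlgHom.norm_map (Θ X) (EquivLike.injective (Θ X)) a }
  have h1 : (fun Y => Θ (X + Y) f) = L ∘ fun Y => Θ Y f := funext fun Y => hΘadd X Y f
  have h2 := L.norm_iteratedFDeriv_comp_left (hf.contDiffAt (x := 0)) (i := m)
    (by exact_mod_cast le_top)
  rw [← h1, iteratedFDeriv_comp_add_left (f := fun Y => Θ Y f)] at h2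
  simpa using h2.le

/-- The inversion identity `∫ conj(k(X)) Θ_{−X}[(𝔉(M_h f))(X)] dX = ⟨k,h⟩·f`; in particular
`f = ‖h‖⁻²·∫ conj(h(X)) Θ_{−X}[(𝔉(M_h f))(X)] dX` when `h ≠ 0`. -/
theorem stmt7 {n : ℕ} {A : Type*} [NormedRing A] [StarRing A] [CStarRing A]
    [NormedAlgebra ℂ A] [StarModule ℂ A] [CompleteSpace A]
    (Θ : Xi n → A ≃⋆ₐ[ℂ] A)
    (hΘadd : ∀ X Y f, Θ (X + Y) f = Θ X (Θ Y f))
    (hΘ0 : ∀ f, Θ 0 f = f)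
    (hΘcont : ∀ f, Continuous fun X => Θ X f)
    (h k : SchwartzMap (Xi n) ℂ) (f : A) (hf : ContDiff ℝ (⊤ : ℕ∞) fun X => Θ X f) :
    (∫ X, (starRingEnd ℂ) (k X) •
        Θ (-X) (∫ Y, Complex.exp (-Complex.I * (symp X Y : ℂ)) •
          (∫ Z, Complex.exp (-Complex.I * (symp Y Z : ℂ)) • (h Z • Θ Z f) ∂(nmeas n))
          ∂(nmeas n)) ∂(nmeas n))
      = (∫ X, (starRingEnd ℂ) (k X) * h X ∂(nmeas n)) • f ∧
    (h ≠ 0 →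
      f = (∫ X, ‖h X‖ ^ 2 ∂(nmeas n))⁻¹ •
        ∫ X, (starRingEnd ℂ) (h X) •
          Θ (-X) (∫ Y, Complex.exp (-Complex.I * (symp X Y : ℂ)) •
            (∫ Z, Complex.exp (-Complex.I * (symp Y Z : ℂ)) • (h Z • Θ Z f) ∂(nmeas n))
            ∂(nmeas n)) ∂(nmeas n)) := by

  let : CStarAlgebra A := {}
  have hgrow := orbit_hasTemperateGrowth Θ hΘadd f hf
  let F : SchwartzMap (Xi n) A :=
    SchwartzMap.bilinLeftCLM (ContinuousLinearMap.lsmul ℂ ℂ) hgrow h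
  have hinv : ∀ X, Θ (-X) (∫ Y, Complex.exp (-Complex.I * (symp X Y : ℂ)) •
      (∫ Z, Complex.exp (-Complex.I * (symp Y Z : ℂ)) • (h Z • Θ Z f) ∂(nmeas n))
      ∂(nmeas n)) = h X • f := by
    intro X
    have hF := symp_fourier_involutive F X
    have hFX : ∀ Z, F Z = h Z • Θ Z f := fun _ => rfl
    simp only [hFX] at hF
    rw [hF, map_smul, ← hΘadd, neg_add_cancel, hΘ0]
  have main : ∀ k : SchwartzMap (Xi n) ℂ, (∫ X, (starRingEnd ℂ) (k X) •
        Θ (-X) (∫ Y, Complex.exp (-Complex.I * (symp X Y : ℂ)) •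
          (∫ Z, Complex.exp (-Complex.I * (symp Y Z : ℂ)) • (h Z • Θ Z f) ∂(nmeas n))
          ∂(nmeas n)) ∂(nmeas n))
      = (∫ X, (starRingEnd ℂ) (k X) * h X ∂(nmeas n)) • f := by
    intro k
    simp_rw [hinv, smul_smul]
    exact integral_smul_const _ f
  refine ⟨main k, fun hh => ?_⟩
  have hsq : (∫ X, (starRingEnd ℂ) (h X) * h X ∂(nmeas n))
      = ((∫ X, ‖h X‖ ^ 2 ∂(nmeas n) : ℝ) : ℂ) := by
    rw [← integral_complex_ofReal]
    refine integral_congr_ae (Filter.Eventually.of_forall fun X => ?_)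
    simp [Complex.conj_mul']
  -- A continuous, nonnegative, nonzero function has positive Lebesgue integral.
  have hne : (∫ X, ‖h X‖ ^ 2 ∂(nmeas n)) ≠ 0 := by
    have hcont : Continuous fun X => ‖h X‖ ^ 2 := h.continuous.norm.pow 2
    obtain ⟨X₀, hX₀⟩ : ∃ X, h X ≠ 0 := by
      by_contra! hc
      exact hh (SchwartzMap.ext hc)
    have : (volume : Measure (Xi n)).IsAddHaarMeasure :=
      Measure.prod.instIsAddHaarMeasure (volume : Measure (Fin n → ℝ)) volume
    have hint : Integrable (fun X => ‖h X‖ ^ 2) (volume : Measure (Xi n)) :=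
      (h.memLp 2).integrable_norm_pow (by norm_num)
    have hpos : 0 < ∫ X, ‖h X‖ ^ 2 :=
      integral_pos_of_integrable_nonneg_nonzero hcont hint (fun X => by positivity)
        (x := X₀) (by simpa using hX₀)
    rw [integral_nmeas]
    exact smul_ne_zero (by positivity) hpos.ne'
  rw [main h, hsq, Complex.coe_smul, smul_smul, inv_mul_cancel₀ hne, one_smul]
end
end

section
/- For every nonzero window h ∈ 𝓢(Ξ), the localized modulation map M_h is injective: if f ∈ A and (M_h f)(X) = ∫_Ξ e^{−iω(X,Y)} h(Y) Θ_Y(f) dY = 0 for every X ∈ Ξ, then f = 0. -/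
/-!
The function `Y ↦ h(Y) Θ_Y(f)` is continuous, and it is integrable because `h` is Schwartz and
`Θ_Y` is isometric. Up to a linear change of the dual variable and a nonzero constant, `M_h f` is
its `A`-valued Fourier transform, so if `M_h f = 0` then Fourier inversion gives
`h(Y) Θ_Y(f) = 0` for every `Y`. At a point `Y` where `h(Y) ≠ 0` this forces `Θ_Y(f) = 0`, hence
`f = 0`, since `Θ_Y` is injective.

Mathlib's inversion theorem needs an inner product space, so the function is transported to
`EuclideanSpace ℝ (Fin n ⊕ Fin n)` by the volume-preserving map `euclToXi`.
-/

open MeasureTheory Complex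
open scoped ENNReal

noncomputable section

/-- The coordinate splitting `ℝ^{2n} → ℝⁿ × ℝⁿ`, with Euclidean norm on the source. -/
def euclToXi (n : ℕ) : EuclideanSpace ℝ (Fin n ⊕ Fin n) ≃ᵐ Xi n :=
  (MeasurableEquiv.toLp 2 (Fin n ⊕ Fin n → ℝ)).symm.trans
    (MeasurableEquiv.sumPiEquivProdPi fun _ => ℝ)

lemma euclToXi_fst {n : ℕ} (v : EuclideanSpace ℝ (Fin n ⊕ Fin n)) (i : Fin n) :
    (euclToXi n v).1 i = v (Sum.inl i) := rfl

lemma euclToXi_snd {n : ℕ} (v : EuclideanSpace ℝ (Fin n ⊕ Fin n)) (i : Fin n) :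
    (euclToXi n v).2 i = v (Sum.inr i) := rfl

lemma continuous_euclToXi (n : ℕ) : Continuous (euclToXi n) := by
  refine Continuous.prodMk ?_ ?_
  · exact continuous_pi fun i => (EuclideanSpace.proj (𝕜 := ℝ) (Sum.inl i)).continuous
  · exact continuous_pi fun i => (EuclideanSpace.proj (𝕜 := ℝ) (Sum.inr i)).continuous

lemma measurePreserving_euclToXi (n : ℕ) : MeasurePreserving (euclToXi n) volume volume :=
  (volume_measurePreserving_sumPiEquivProdPi fun _ : Fin n ⊕ Fin n => ℝ).comp
    (PiLp.volume_preserving_ofLp (Fin n ⊕ Fin n))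

/-- The frequency `X` is chosen so that `ω(X, Y) = 2π ⟪v, w⟫` when `Y` corresponds to `v`. -/
lemma symp_eq_inner {n : ℕ} (v w : EuclideanSpace ℝ (Fin n ⊕ Fin n)) :
    symp (fun i => -(2 * Real.pi) * w (Sum.inr i), fun i => 2 * Real.pi * w (Sum.inl i))
      (euclToXi n v) = 2 * Real.pi * inner ℝ v w := by
  simp only [symp, euclToXi_fst, euclToXi_snd, PiLp.inner_apply, Fintype.sum_sum_type, mul_add,
    Finset.mul_sum, sub_eq_add_neg, ← Finset.sum_neg_distrib]
  congr 1 <;> refine Finset.sum_congr rfl fun i _ => ?_ <;> simp <;> ring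

/-- Injectivity of the symplectic Fourier transform on continuous integrable functions with
values in a Banach space. -/
lemma eq_zero_of_symp_fourier_eq_zero {n : ℕ} {E : Type*} [NormedAddCommGroup E]
    [NormedSpace ℂ E] [CompleteSpace E] (g : Xi n → E) (hgc : Continuous g)
    (hgi : Integrable g volume)
    (hz : ∀ X : Xi n,
      (∫ Y, Complex.exp (-Complex.I * (symp X Y : ℂ)) • g Y ∂(nmeas n)) = 0) :
    g = 0 := by
  have hc : Continuous (g ∘ euclToXi n) := hgc.comp (continuous_euclToXi n)
  have hi : Integrable (g ∘ euclToXi n) volume :=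
    (measurePreserving_euclToXi n).integrable_comp_of_integrable hgi
  have hF : FourierTransform.fourier (g ∘ euclToXi n) = 0 := by
    funext w
    have h1 := hz (fun i => -(2 * Real.pi) * w (Sum.inr i), fun i => 2 * Real.pi * w (Sum.inl i))
    have hpi : (0 : ℝ) < (2 * Real.pi) ^ n := by positivity
    rw [nmeas, integral_smul_measure, smul_eq_zero] at h1
    have h2 := h1.resolve_left (by
      rw [ENNReal.toReal_inv, ENNReal.toReal_ofReal hpi.le]; positivity)
    rw [← (measurePreserving_euclToXi n).integral_comp (euclToXi n).measurableEmbedding] at h2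
    rw [Real.fourier_eq, Pi.zero_apply, ← h2]
    refine integral_congr_ae (Filter.Eventually.of_forall fun v => ?_)
    simp only [symp_eq_inner, Circle.smul_def, Real.fourierChar_apply, Function.comp_apply]
    congr 2
    push_cast
    ring
  have h0 := hc.fourierInv_fourier_eq hi (by rw [hF]; exact integrable_zero _ _ _)
  funext Y
  have h3 := congrFun h0 ((euclToXi n).symm Y)
  rw [hF, Real.fourierInv_eq] at h3
  simpa using h3.symm

/-- For every nonzero window `h ∈ 𝓢(Ξ)`, the localized modulation map `M_h` is injective. -/
theorem stmt8 {n : ℕ} {A : Type*} [NormedRing A] [StarRing A] [CStarRing A]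
    [NormedAlgebra ℂ A] [StarModule ℂ A] [CompleteSpace A]
    (Θ : Xi n → A ≃⋆ₐ[ℂ] A)
    (hΘadd : ∀ X Y f, Θ (X + Y) f = Θ X (Θ Y f))
    (hΘ0 : ∀ f, Θ 0 f = f)
    (hΘcont : ∀ f, Continuous fun X => Θ X f)
    (h : SchwartzMap (Xi n) ℂ) (hh : h ≠ 0) (f : A)
    (hz : ∀ X : Xi n,
      (∫ Y, Complex.exp (-Complex.I * (symp X Y : ℂ)) • (h Y • Θ Y f) ∂(nmeas n)) = 0) :
    f = 0 := by
  let _ : CStarAlgebra A := {}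
  have hc : Continuous fun Y => h Y • Θ Y f := h.continuous.smul (hΘcont f)
  have hHaar : (volume : Measure (Xi n)).IsAddHaarMeasure :=
    Measure.prod.instIsAddHaarMeasure (volume : Measure (Fin n → ℝ)) volume
  have hi : Integrable (fun Y => h Y • Θ Y f) volume := by
    refine (h.integrable.norm.mul_const ‖f‖).mono' hc.aestronglyMeasurable
      (Filter.Eventually.of_forall fun Y => ?_)
    rw [norm_smul, StarAlgEquiv.norm_map (Θ Y) f]
  have h0 := eq_zero_of_symp_fourier_eq_zero _ hc hi hz
  obtain ⟨Y, hY⟩ : ∃ Y, h Y ≠ 0 := by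
    by_contra! H
    exact hh (SchwartzMap.ext H)
  have h1 : Θ Y f = 0 := (smul_eq_zero.mp (congrFun h0 Y)).resolve_left hY
  exact (map_eq_zero_iff (Θ Y) (Θ Y).injective).mp h1
end
end
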